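/- Let X_R be uniform on the sphere of radius R in ℝⁿ and Z a standard Gaussian in ℝⁿ independent of X_R; for s > 0 set Y = X_R + √s Z. Then the conditional-mean estimator error has E[‖X_R − E[X_R|Y]‖². | fixed input x with ‖x‖ = R] = R² − R² E[h_{n/2}²(‖x + √s Z‖R/s)], i.e., for any x with ‖x‖ = R, E[‖x − (R(x+√sZ)/‖x+√sZ‖) h_{n/2}(‖x+√sZ‖R/s)‖²] = R² − R² E[h_{n/2}²(‖x+√sZ‖R/s)]. -/

import Mathlib

open MeasureTheory ProbabilityTheory

/-- Modified Bessel function of the first kind of order `ν`. -/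
noncomputable def besselI (ν x : ℝ) : ℝ :=
  ∑' k : ℕ, (x / 2) ^ (2 * (k : ℝ) + ν) / (k.factorial * Real.Gamma ((k : ℝ) + ν + 1))

/-- Ratio `h_ν(x) = I_ν(x) / I_{ν-1}(x)`. -/
noncomputable def besselRatio (ν x : ℝ) : ℝ := besselI ν x / besselI (ν - 1) x

/-- Standard Gaussian measure on `ℝⁿ`. -/
noncomputable def stdGaussian (n : ℕ) : Measure (Fin n → ℝ) :=
  Measure.pi fun _ => gaussianReal 0 1

/-- Euclidean norm on `Fin n → ℝ`. -/
noncomputable def euclNorm {n : ℕ} (z : Fin n → ℝ) : ℝ := Real.sqrt (∑ i, z i ^ 2)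

/-!
Condition on `‖Y‖ = r`, where `Y = x + √s Z`. By polar coordinates the direction of `Y` has the
von Mises–Fisher density proportional to `θ ↦ exp ⟪(r / s) x, θ⟫` on the unit sphere. Expanding the
exponential, and reading off the spherical moments of a linear form from its Gaussian moments, one
finds that the mean of `⟪x, θ⟫` under this density is `‖x‖ h(r ‖x‖ / s)` with `h = h_{n/2}`. Hence
the residual `⟪x, Y⟫ / ‖Y‖ - ‖x‖ h(‖Y‖ ‖x‖ / s)` is orthogonal to every function of `‖Y‖`, in
particular to `h(‖Y‖ ‖x‖ / s)` itself, so the cross term of the squared error equals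
`-2 ‖x‖² E h²`.
-/

section PolarCoordinates

open Set Metric Module

variable {E G : Type*} [NormedAddCommGroup E] [NormedSpace ℝ E] [FiniteDimensional ℝ E]
  [MeasurableSpace E] [BorelSpace E] [NormedAddCommGroup G] [NormedSpace ℝ G]

theorem integral_volumeIoiPow (n : ℕ) (f : ℝ → G) :
    ∫ r : Ioi (0 : ℝ), f r ∂Measure.volumeIoiPow n = ∫ r in Ioi (0 : ℝ), r ^ n • f r := by
  simp only [Measure.volumeIoiPow, ENNReal.ofReal]
  rw [integral_withDensity_eq_integral_smul
      (measurable_subtype_coe.pow_const _).real_toNNReal,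
    integral_subtype_comap measurableSet_Ioi fun r ↦ Real.toNNReal (r ^ n) • f r]
  refine setIntegral_congr_fun measurableSet_Ioi fun r hr ↦ ?_
  rw [NNReal.smul_def, Real.coe_toNNReal _ (pow_nonneg (le_of_lt hr) _)]

theorem integral_eq_integral_toSphere_prod [Nontrivial E] (μ : Measure E) [μ.IsAddHaarMeasure]
    (F : E → G) :
    ∫ y, F y ∂μ = ∫ p : sphere (0 : E) 1 × Ioi (0 : ℝ), F ((p.2 : ℝ) • (p.1 : E))
      ∂(μ.toSphere.prod (.volumeIoiPow (finrank ℝ E - 1))) := by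
  rw [← μ.measurePreserving_homeomorphUnitSphereProd.integral_comp
      (Homeomorph.measurableEmbedding _), ← restrict_compl_singleton (μ := μ) 0,
    ← integral_subtype_comap (measurableSet_singleton _).compl F, restrict_compl_singleton]
  congr! 2 with y
  rw [← homeomorphUnitSphereProd_symm_apply_coe E (homeomorphUnitSphereProd E y),
    Homeomorph.symm_apply_apply]

theorem integral_eq_zero_of_integral_sphere_eq_zero [Nontrivial E] (μ : Measure E)
    [μ.IsAddHaarMeasure] {F : E → G}
    (hF : ∀ r : ℝ, 0 < r → ∫ θ : sphere (0 : E) 1, F (r • (θ : E)) ∂μ.toSphere = 0) :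
    ∫ y, F y ∂μ = 0 := by
  rw [integral_eq_integral_toSphere_prod]
  by_cases hint : Integrable (fun p : sphere (0 : E) 1 × Ioi (0 : ℝ) ↦ F ((p.2 : ℝ) • (p.1 : E)))
      (μ.toSphere.prod (.volumeIoiPow (finrank ℝ E - 1)))
  · rw [integral_prod_symm _ hint]
    exact integral_eq_zero_of_ae (.of_forall fun r ↦ hF r r.2)
  · exact integral_undef hint

theorem integral_homogeneous_mul_radial [Nontrivial E] (μ : Measure E) [μ.IsAddHaarMeasure]
    {f : E → ℝ} {m : ℕ} (hf : ∀ r : ℝ, 0 < r → ∀ y, f (r • y) = r ^ m * f y) (g : ℝ → ℝ) :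
    ∫ y, f y * g ‖y‖ ∂μ = (∫ θ : sphere (0 : E) 1, f θ ∂μ.toSphere) *
      ∫ r in Ioi (0 : ℝ), r ^ (finrank ℝ E - 1) * (r ^ m * g r) := by
  have hradial := integral_volumeIoiPow (finrank ℝ E - 1) fun r ↦ r ^ m * g r
  simp only [smul_eq_mul] at hradial
  rw [integral_eq_integral_toSphere_prod, ← hradial,
    ← integral_prod_mul (fun θ : sphere (0 : E) 1 ↦ f θ)]
  refine integral_congr_ae (.of_forall fun p ↦ ?_)
  have hr : (0 : ℝ) < p.2 := p.2.2
  simp only [hf _ hr, norm_smul, norm_eq_of_mem_sphere, mul_one,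
    Real.norm_of_nonneg hr.le]
  ring

end PolarCoordinates

section GaussianIntegrals

open Real Set Module
open scoped Nat

theorem integral_pow_mul_exp_neg_sq_div_two (m : ℕ) :
    ∫ r in Ioi (0 : ℝ), r ^ m * exp (-r ^ 2 / 2) =
      2 ^ (((m : ℝ) - 1) / 2) * Gamma (((m : ℝ) + 1) / 2) := by
  have h := integral_rpow_mul_exp_neg_mul_rpow (p := 2) (q := m) (b := 1 / 2) (by norm_num)
    (by linarith [m.cast_nonneg (α := ℝ)]) (by norm_num)
  simp only [rpow_natCast, rpow_two] at h
  rw [one_div, inv_rpow zero_le_two, ← rpow_neg zero_le_two, neg_div, neg_neg,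
    ← rpow_neg_one 2, ← rpow_add zero_lt_two] at h
  convert h using 3
  · ring_nf
  · ring_nf

theorem integral_odd_pow_gaussianReal (v : NNReal) {m : ℕ} (hm : Odd m) :
    ∫ t, t ^ m ∂gaussianReal 0 v = 0 := by
  have h : ∫ t, t ^ m ∂(gaussianReal 0 v).map (fun t ↦ -t) = ∫ t, (-t) ^ m ∂gaussianReal 0 v :=
    integral_map (by fun_prop) (by fun_prop)
  rw [gaussianReal_map_neg, neg_zero] at h
  simp only [hm.neg_pow, integral_neg] at h
  linarith

theorem integral_pow_two_mul_gaussianReal (k : ℕ) :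
    ∫ t, t ^ (2 * k) ∂gaussianReal 0 1 = (2 * k - 1 : ℕ)‼ := by
  have hdensity (t : ℝ) : gaussianPDFReal 0 1 t • t ^ (2 * k) =
      (√(2 * π))⁻¹ * (|t| ^ (2 * k) * exp (-|t| ^ 2 / 2)) := by
    simp only [gaussianPDFReal, NNReal.coe_one, mul_one, sub_zero, sq_abs,
      (even_two_mul k).pow_abs, smul_eq_mul]
    ring
  rw [integral_gaussianReal_eq_integral_smul one_ne_zero]
  simp only [hdensity]
  rw [integral_comp_abs (f := fun t ↦ (√(2 * π))⁻¹ * (t ^ (2 * k) * exp (-t ^ 2 / 2))),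
    integral_const_mul, integral_pow_mul_exp_neg_sq_div_two]
  have hexp : (((2 * k : ℕ) : ℝ) - 1) / 2 = k - 1 / 2 := by push_cast; ring
  have harg : (((2 * k : ℕ) : ℝ) + 1) / 2 = k + 1 / 2 := by push_cast; ring
  rw [hexp, harg, Gamma_nat_add_half, rpow_sub zero_lt_two, rpow_natCast, ← sqrt_eq_rpow,
    sqrt_mul zero_le_two]
  field_simp
  rw [sq_sqrt zero_le_two]

variable {E G : Type*} [NormedAddCommGroup E] [InnerProductSpace ℝ E] [FiniteDimensional ℝ E]
  [MeasurableSpace E] [BorelSpace E] [NormedAddCommGroup G] [NormedSpace ℝ G]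

theorem map_inner_stdGaussian (v : E) :
    (ProbabilityTheory.stdGaussian E).map (inner ℝ v) = gaussianReal 0 (‖v‖₊ ^ 2) := by
  have h := IsGaussian.map_eq_gaussianReal (μ := ProbabilityTheory.stdGaussian E) (innerSL ℝ v)
  rw [integral_strongDual_stdGaussian, variance_dual_stdGaussian, innerSL_apply_norm] at h
  rwa [Real.toNNReal_pow (norm_nonneg v), norm_toNNReal] at h

theorem integral_inner_pow_stdGaussian (v : E) (m : ℕ) :
    ∫ y, inner ℝ v y ^ m ∂ProbabilityTheory.stdGaussian E =
      ‖v‖ ^ m * ∫ t, t ^ m ∂gaussianReal 0 1 := by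
  have hscale : gaussianReal 0 (‖v‖₊ ^ 2) = (gaussianReal 0 1).map (‖v‖ * ·) := by
    rw [gaussianReal_map_const_mul, mul_zero, mul_one]
    rfl
  rw [← integral_map (f := fun t : ℝ ↦ t ^ m) (by fun_prop) (by fun_prop),
    map_inner_stdGaussian, hscale, integral_map (by fun_prop) (by fun_prop)]
  simp only [mul_pow, integral_const_mul]

theorem integrable_exp_neg_norm_sq_div_two : Integrable fun y : E ↦ exp (-‖y‖ ^ 2 / 2) := by
  refine .of_integral_ne_zero (ne_of_gt ?_)
  calc
    0 < (π / (1 / 2)) ^ ((finrank ℝ E : ℝ) / 2) := by positivity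
    _ = ∫ y : E, exp (-‖y‖ ^ 2 / 2) := by
      rw [← GaussianFourier.integral_rexp_neg_mul_sq_norm one_half_pos]
      congr! 3
      ring

theorem stdGaussian_eq_withDensity :
    ProbabilityTheory.stdGaussian E = (volume : Measure E).withDensity fun y ↦
      ENNReal.ofReal ((2 * π) ^ (-(finrank ℝ E : ℝ) / 2) * exp (-‖y‖ ^ 2 / 2)) := by
  have hint := integrable_exp_neg_norm_sq_div_two (E := E) |>.const_mul
    ((2 * π) ^ (-(finrank ℝ E : ℝ) / 2))
  have := isFiniteMeasure_withDensity_ofReal hint.2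
  refine Measure.ext_of_charFun (funext fun t ↦ ?_)
  have hnorm : ((π : ℂ) / (1 / 2)) ^ ((finrank ℝ E : ℂ) / 2) =
      ((2 * π) ^ ((finrank ℝ E : ℝ) / 2) : ℝ) := by
    rw [Complex.ofReal_cpow (by positivity)]
    push_cast
    ring_nf
  have hfourier : ∫ y : E, Complex.exp (-(1 / 2) * ‖y‖ ^ 2 + Complex.I * inner ℝ t y) =
      ((2 * π) ^ ((finrank ℝ E : ℝ) / 2) : ℝ) * Complex.exp (-‖t‖ ^ 2 / 2) := by
    rw [GaussianFourier.integral_cexp_neg_mul_sq_norm_add (by norm_num), hnorm, Complex.I_sq]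
    ring_nf
  have hmul : (2 * π) ^ (-(finrank ℝ E : ℝ) / 2) * (2 * π) ^ ((finrank ℝ E : ℝ) / 2) = 1 := by
    rw [← rpow_add (by positivity), neg_div, neg_add_cancel, rpow_zero]
  rw [charFun_stdGaussian, charFun_apply, integral_withDensity_eq_integral_toReal_smul
    (by fun_prop) (by simp)]
  calc
    _ = ((2 * π) ^ (-(finrank ℝ E : ℝ) / 2) : ℝ) *
        ∫ y : E, Complex.exp (-(1 / 2) * ‖y‖ ^ 2 + Complex.I * inner ℝ t y) := by
      rw [hfourier, ← mul_assoc, ← Complex.ofReal_mul, hmul, Complex.ofReal_one, one_mul]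
    _ = _ := by
      rw [← integral_const_mul]
      congr! 2
      rw [ENNReal.toReal_ofReal (by positivity), Complex.real_smul, Complex.ofReal_mul,
        Complex.exp_add, real_inner_comm]
      push_cast
      ring_nf

theorem integral_stdGaussian (F : E → G) :
    ∫ y, F y ∂ProbabilityTheory.stdGaussian E =
      (2 * π) ^ (-(finrank ℝ E : ℝ) / 2) • ∫ y, exp (-‖y‖ ^ 2 / 2) • F y := by
  rw [stdGaussian_eq_withDensity,
    integral_withDensity_eq_integral_toReal_smul (by fun_prop) (by simp), ← integral_smul]
  congr! 2
  rw [ENNReal.toReal_ofReal (by positivity), mul_smul]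

theorem integral_homogeneous_stdGaussian [Nontrivial E] {f : E → ℝ} {m : ℕ}
    (hf : ∀ r : ℝ, 0 < r → ∀ y, f (r • y) = r ^ m * f y) :
    ∫ y, f y ∂ProbabilityTheory.stdGaussian E = (2 * π) ^ (-(finrank ℝ E : ℝ) / 2) *
      (2 ^ (((finrank ℝ E : ℝ) + m) / 2 - 1) * Gamma (((finrank ℝ E : ℝ) + m) / 2)) *
      ∫ θ : Metric.sphere (0 : E) 1, f θ ∂(volume : Measure E).toSphere := by
  have hdim : ((finrank ℝ E - 1 + m : ℕ) : ℝ) = finrank ℝ E + m - 1 := by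
    rw [Nat.cast_add, Nat.cast_pred finrank_pos]
    ring
  have hpolar := integral_homogeneous_mul_radial volume hf fun r ↦ exp (-r ^ 2 / 2)
  simp only [← mul_assoc, ← pow_add, integral_pow_mul_exp_neg_sq_div_two, hdim] at hpolar
  simp only [integral_stdGaussian, smul_eq_mul, mul_comm (exp _), hpolar]
  ring_nf

end GaussianIntegrals

section SphericalIntegrals

open Real Set Metric Module
open scoped Nat

variable {E : Type*} [NormedAddCommGroup E] [InnerProductSpace ℝ E]

theorem abs_inner_sphere_le_norm (v : E) (θ : sphere (0 : E) 1) : |inner ℝ v (θ : E)| ≤ ‖v‖ := by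
  simpa using abs_real_inner_le_norm v (θ : E)

variable [FiniteDimensional ℝ E] [MeasurableSpace E] [BorelSpace E]

theorem integral_inner_pow_toSphere_mul_Gamma [Nontrivial E] (v : E) (m : ℕ) :
    (∫ θ : sphere (0 : E) 1, inner ℝ v θ ^ m ∂(volume : Measure E).toSphere) *
        Gamma (((finrank ℝ E : ℝ) + m) / 2) =
      2 * π ^ ((finrank ℝ E : ℝ) / 2) * (‖v‖ ^ m / 2 ^ ((m : ℝ) / 2)) *
        ∫ t, t ^ m ∂gaussianReal 0 1 := by
  have h := integral_homogeneous_stdGaussian (f := fun y : E ↦ inner ℝ v y ^ m) (m := m)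
    fun r _ y ↦ by rw [inner_smul_right, mul_pow]
  rw [integral_inner_pow_stdGaussian, neg_div, rpow_neg (by positivity),
    mul_rpow zero_le_two pi_nonneg, add_div, rpow_sub_one two_ne_zero, rpow_add zero_lt_two] at h
  rw [mul_div_assoc', mul_right_comm, mul_div_assoc, add_div]
  field_simp at h ⊢
  linear_combination -h

theorem integral_inner_pow_odd_toSphere [Nontrivial E] (v : E) {m : ℕ} (hm : Odd m) :
    ∫ θ : sphere (0 : E) 1, inner ℝ v θ ^ m ∂(volume : Measure E).toSphere = 0 := by
  have hdim : 0 < (finrank ℝ E : ℝ) := Nat.cast_pos.2 finrank_pos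
  have h := integral_inner_pow_toSphere_mul_Gamma v m
  rw [integral_odd_pow_gaussianReal 1 hm, mul_zero] at h
  exact (mul_eq_zero.1 h).resolve_right (Gamma_pos_of_pos (by positivity)).ne'

theorem factorial_two_mul_eq_mul_doubleFactorial (k : ℕ) :
    (2 * k)! = 2 ^ k * k ! * (2 * k - 1)‼ := by
  cases k with
  | zero => rfl
  | succ k => exact Nat.doubleFactorial_two_mul (k + 1) ▸
    Nat.factorial_eq_mul_doubleFactorial (2 * k + 1)

theorem integral_inner_pow_even_toSphere [Nontrivial E] (v : E) (k : ℕ) :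
    ∫ θ : sphere (0 : E) 1, inner ℝ v θ ^ (2 * k) ∂(volume : Measure E).toSphere =
      2 * π ^ ((finrank ℝ E : ℝ) / 2) * (2 * k)! * (‖v‖ / 2) ^ (2 * k) /
        (k ! * Gamma (k + (finrank ℝ E : ℝ) / 2)) := by
  have hdim : 0 < (finrank ℝ E : ℝ) := Nat.cast_pos.2 finrank_pos
  have harg : ((finrank ℝ E : ℝ) + (2 * k : ℕ)) / 2 = k + (finrank ℝ E : ℝ) / 2 := by
    push_cast
    ring
  have hexp : ((2 * k : ℕ) : ℝ) / 2 = k := by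
    push_cast
    ring
  have hGamma : Gamma (k + (finrank ℝ E : ℝ) / 2) ≠ 0 := (Gamma_pos_of_pos (by positivity)).ne'
  have h := integral_inner_pow_toSphere_mul_Gamma v (2 * k)
  rw [integral_pow_two_mul_gaussianReal, harg, hexp, rpow_natCast, ← eq_div_iff hGamma] at h
  rw [h, factorial_two_mul_eq_mul_doubleFactorial, div_pow, two_mul k, pow_add 2]
  push_cast
  field_simp

/-- The integral of `⟪v, θ⟫ ^ j * exp ⟪v, θ⟫` over the unit sphere, with respect to the surface
measure. For `j = 0` this is the normalizing constant of the von Mises–Fisher density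
`θ ↦ exp ⟪v, θ⟫`, and the quotient of the cases `j = 1` and `j = 0` is the mean of `⟪v, θ⟫`. -/
noncomputable def sphereExpMoment (j : ℕ) (v : E) : ℝ :=
  ∫ θ : sphere (0 : E) 1, inner ℝ v θ ^ j * exp (inner ℝ v θ) ∂(volume : Measure E).toSphere

theorem integrable_toSphere_of_continuous {f : sphere (0 : E) 1 → ℝ} (hf : Continuous f) :
    Integrable f (volume : Measure E).toSphere :=
  hf.integrable_of_hasCompactSupport (.of_compactSpace f)

theorem sphereExpMoment_zero_pos [Nontrivial E] (v : E) : 0 < sphereExpMoment 0 v := by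
  have : NeZero (volume : Measure E).toSphere := ⟨Measure.toSphere_ne_zero _⟩
  simp only [sphereExpMoment, pow_zero, one_mul]
  exact integral_exp_pos (integrable_toSphere_of_continuous (by fun_prop))

theorem abs_sphereExpMoment_one_le (v : E) :
    |sphereExpMoment 1 v| ≤ ‖v‖ * sphereExpMoment 0 v := by
  simp only [sphereExpMoment, pow_zero, pow_one, one_mul, ← integral_const_mul]
  refine abs_integral_le_integral_abs.trans (integral_mono
    (integrable_toSphere_of_continuous (by fun_prop))
    (integrable_toSphere_of_continuous (by fun_prop)) fun θ ↦ ?_)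
  simp only [abs_mul, abs_exp]
  gcongr
  exact abs_inner_sphere_le_norm v θ

theorem continuous_sphereExpMoment (j : ℕ) :
    Continuous (sphereExpMoment j : E → ℝ) := by
  have h := continuous_parametric_integral_of_continuous (μ := (volume : Measure E).toSphere)
    (f := fun (v : E) (θ : sphere (0 : E) 1) ↦ inner ℝ v θ ^ j * exp (inner ℝ v θ))
    (by unfold Function.uncurry; fun_prop) isCompact_univ
  rwa [Measure.restrict_univ] at h

theorem hasSum_sphereExpMoment (j : ℕ) (v : E) :
    HasSum (fun m : ℕ ↦
      (∫ θ : sphere (0 : E) 1, inner ℝ v θ ^ (m + j) ∂(volume : Measure E).toSphere) / (m ! : ℝ))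
      (sphereExpMoment j v) := by
  let F (m : ℕ) (θ : sphere (0 : E) 1) : ℝ := inner ℝ v θ ^ (m + j) / (m ! : ℝ)
  have hF (m : ℕ) : Integrable (F m) (volume : Measure E).toSphere :=
    integrable_toSphere_of_continuous (by fun_prop)
  have hbound (m : ℕ) : ∫ θ, ‖F m θ‖ ∂(volume : Measure E).toSphere ≤
      ‖v‖ ^ m / (m ! : ℝ) * (‖v‖ ^ j * (volume : Measure E).toSphere.real univ) := by
    calc
      _ ≤ ∫ _, ‖v‖ ^ (m + j) / (m ! : ℝ) ∂(volume : Measure E).toSphere := by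
        refine integral_mono (hF m).norm (integrable_const _) fun θ ↦ ?_
        simp only [F, norm_div, norm_pow, Real.norm_eq_abs, Nat.abs_cast]
        gcongr
        exact abs_inner_sphere_le_norm v θ
      _ = _ := by
        rw [integral_const, smul_eq_mul, pow_add]
        ring
  have hsum (θ : sphere (0 : E) 1) :
      ∑' m, F m θ = inner ℝ v θ ^ j * exp (inner ℝ v θ) := by
    rw [exp_eq_exp_ℝ, NormedSpace.exp_eq_tsum_div, ← tsum_mul_left]
    exact tsum_congr fun m ↦ by simp only [F]; ring
  have h := hasSum_integral_of_summable_integral_norm hF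
    (.of_nonneg_of_le (fun m ↦ by positivity) hbound
      ((summable_pow_div_factorial ‖v‖).mul_right _))
  simpa only [hsum, F, integral_div, sphereExpMoment] using h

theorem rpow_mul_sphereExpMoment_zero [Nontrivial E] {v : E} (hv : v ≠ 0) :
    (‖v‖ / 2) ^ ((finrank ℝ E : ℝ) / 2 - 1) * sphereExpMoment 0 v =
      2 * π ^ ((finrank ℝ E : ℝ) / 2) * besselI ((finrank ℝ E : ℝ) / 2 - 1) ‖v‖ := by
  have hv2 : 0 < ‖v‖ / 2 := by positivity
  have h := hasSum_sphereExpMoment 0 v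
  rw [← (mul_right_injective₀ two_ne_zero).hasSum_iff] at h
  · rw [besselI, ← h.tsum_eq, ← tsum_mul_left, ← tsum_mul_left]
    refine tsum_congr fun k ↦ ?_
    have hpow : (‖v‖ / 2) ^ (2 * (k : ℝ) + ((finrank ℝ E : ℝ) / 2 - 1)) =
        (‖v‖ / 2) ^ (2 * k) * (‖v‖ / 2) ^ ((finrank ℝ E : ℝ) / 2 - 1) := by
      rw [rpow_add hv2]
      exact_mod_cast rfl
    rw [Function.comp_apply, add_zero, integral_inner_pow_even_toSphere, hpow,
      show (k : ℝ) + ((finrank ℝ E : ℝ) / 2 - 1) + 1 = k + (finrank ℝ E : ℝ) / 2 by ring]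
    field_simp
  · intro m hm
    have hodd : Odd m := Nat.not_even_iff_odd.1 fun ⟨k, hk⟩ ↦ hm ⟨k, by simp only; omega⟩
    rw [add_zero, integral_inner_pow_odd_toSphere v hodd, zero_div]

theorem rpow_mul_sphereExpMoment_one [Nontrivial E] {v : E} (hv : v ≠ 0) :
    (‖v‖ / 2) ^ ((finrank ℝ E : ℝ) / 2 - 1) * sphereExpMoment 1 v =
      2 * π ^ ((finrank ℝ E : ℝ) / 2) * (‖v‖ * besselI ((finrank ℝ E : ℝ) / 2) ‖v‖) := by
  have hv2 : 0 < ‖v‖ / 2 := by positivity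
  have hinj : Function.Injective fun k : ℕ ↦ 2 * k + 1 := fun a b hab ↦ by simpa using hab
  have h := hasSum_sphereExpMoment 1 v
  rw [← hinj.hasSum_iff] at h
  · rw [besselI, ← h.tsum_eq, ← tsum_mul_left, ← tsum_mul_left, ← tsum_mul_left]
    refine tsum_congr fun k ↦ ?_
    have hpow : (‖v‖ / 2) ^ (2 * (k : ℝ) + (finrank ℝ E : ℝ) / 2) =
        (‖v‖ / 2) ^ (2 * k + 1) * (‖v‖ / 2) ^ ((finrank ℝ E : ℝ) / 2 - 1) := by
      rw [← rpow_natCast, ← rpow_add hv2]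
      push_cast
      ring_nf
    rw [Function.comp_apply, show 2 * k + 1 + 1 = 2 * (k + 1) by ring,
      integral_inner_pow_even_toSphere, hpow, Nat.cast_succ, add_right_comm (k : ℝ) 1,
      show (2 * (k + 1))! = 2 * (k + 1) * (2 * k + 1)! from Nat.factorial_succ (2 * k + 1),
      Nat.factorial_succ k]
    push_cast
    field_simp
    ring
  · intro m hm
    have hodd : Odd (m + 1) := by
      refine (Nat.not_odd_iff_even.1 fun ⟨k, hk⟩ ↦ hm ⟨k, hk.symm⟩).add_one
    rw [integral_inner_pow_odd_toSphere v hodd, zero_div]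

end SphericalIntegrals

section BesselRatio

open Real Metric Module

variable {E : Type*} [NormedAddCommGroup E] [InnerProductSpace ℝ E] [FiniteDimensional ℝ E]
  [MeasurableSpace E] [BorelSpace E] [Nontrivial E]

theorem besselI_zero_right {ν : ℝ} (hν : 0 < ν) : besselI ν 0 = 0 := by
  have hterm (k : ℕ) : (0 : ℝ) ^ (2 * (k : ℝ) + ν) = 0 := zero_rpow (by positivity)
  simp only [besselI, zero_div, hterm, tsum_zero]

theorem besselRatio_zero_right {ν : ℝ} (hν : 0 < ν) : besselRatio ν 0 = 0 := by
  rw [besselRatio, besselI_zero_right hν, zero_div]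

theorem besselRatio_norm_eq (v : E) :
    besselRatio ((finrank ℝ E : ℝ) / 2) ‖v‖ =
      sphereExpMoment 1 v / (‖v‖ * sphereExpMoment 0 v) := by
  obtain rfl | hv := eq_or_ne v 0
  · have hdim : 0 < (finrank ℝ E : ℝ) := Nat.cast_pos.2 finrank_pos
    rw [norm_zero, besselRatio_zero_right (by positivity), zero_mul, div_zero]
  · have hscale : 0 < (‖v‖ / 2) ^ ((finrank ℝ E : ℝ) / 2 - 1) := by positivity
    rw [← mul_div_mul_left (sphereExpMoment 1 v) _ hscale.ne', mul_left_comm,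
      rpow_mul_sphereExpMoment_one hv, rpow_mul_sphereExpMoment_zero hv, besselRatio]
    field_simp

theorem abs_besselRatio_norm_le_one (v : E) :
    |besselRatio ((finrank ℝ E : ℝ) / 2) ‖v‖| ≤ 1 := by
  have hpos := sphereExpMoment_zero_pos v
  rw [besselRatio_norm_eq, abs_div, abs_of_nonneg (a := ‖v‖ * _) (by positivity)]
  exact div_le_one_of_le₀ (abs_sphereExpMoment_one_le v) (by positivity)

theorem measurable_besselRatio_norm :
    Measurable fun v : E ↦ besselRatio ((finrank ℝ E : ℝ) / 2) ‖v‖ := by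
  simp only [besselRatio_norm_eq]
  exact (continuous_sphereExpMoment 1).measurable.div
    (measurable_norm.mul (continuous_sphereExpMoment 0).measurable)

theorem sphereExpMoment_one_eq (v : E) :
    sphereExpMoment 1 v =
      ‖v‖ * besselRatio ((finrank ℝ E : ℝ) / 2) ‖v‖ * sphereExpMoment 0 v := by
  obtain rfl | hv := eq_or_ne v 0
  · simp [sphereExpMoment]
  · have hpos := sphereExpMoment_zero_pos v
    rw [besselRatio_norm_eq]
    field_simp

end BesselRatio

section ConditionalMean

open Real Metric Module

variable {E G : Type*} [NormedAddCommGroup E] [InnerProductSpace ℝ E]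
  [NormedAddCommGroup G] [NormedSpace ℝ G]

/-- The conditional mean of the cosine of the angle between a signal, uniformly distributed on the
sphere of radius `R`, and its observation `y` in additive Gaussian noise of variance `s` per
coordinate. -/
noncomputable def meanCosine (R s : ℝ) (y : E) : ℝ :=
  besselRatio ((finrank ℝ E : ℝ) / 2) (‖y‖ * R / s)

/-- The conditional mean of a signal, uniformly distributed on the sphere of radius `R`, given its
observation `y` in additive Gaussian noise of variance `s` per coordinate. At `y = 0` the division
by zero gives the correct value `0`. -/
noncomputable def posteriorMean (R s : ℝ) (y : E) : E :=
  (R * meanCosine R s y / ‖y‖) • y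

theorem meanCosine_eq_besselRatio_norm {R s : ℝ} (hR : 0 ≤ R) (hs : 0 < s) (y : E) :
    meanCosine R s y = besselRatio ((finrank ℝ E : ℝ) / 2) ‖(R / s) • y‖ := by
  rw [meanCosine, norm_smul, Real.norm_of_nonneg (by positivity), mul_comm, div_mul_eq_mul_div]

theorem exp_neg_norm_smul_sub_sq_div (r s : ℝ) (x : E) (θ : sphere (0 : E) 1) :
    exp (-‖r • (θ : E) - x‖ ^ 2 / (2 * s)) =
      exp (-(r ^ 2 + ‖x‖ ^ 2) / (2 * s)) * exp (inner ℝ ((r / s) • x) (θ : E)) := by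
  rw [← exp_add, norm_sub_sq_real, norm_smul, norm_eq_of_mem_sphere, mul_one, norm_eq_abs, sq_abs,
    real_inner_smul_left, real_inner_smul_left, real_inner_comm]
  congr 1
  ring

variable [FiniteDimensional ℝ E]

theorem meanCosine_zero [Nontrivial E] (R s : ℝ) : meanCosine R s (0 : E) = 0 := by
  have hdim : 0 < (finrank ℝ E : ℝ) := Nat.cast_pos.2 finrank_pos
  rw [meanCosine, norm_zero, zero_mul, zero_div, besselRatio_zero_right (by positivity)]

theorem norm_sub_posteriorMean_sq [Nontrivial E] (s : ℝ) (x y : E) :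
    ‖x - posteriorMean ‖x‖ s y‖ ^ 2 =
      ‖x‖ ^ 2 - ‖x‖ ^ 2 * meanCosine ‖x‖ s y ^ 2 -
        2 * ‖x‖ * (meanCosine ‖x‖ s y * (inner ℝ x y / ‖y‖ - ‖x‖ * meanCosine ‖x‖ s y)) := by
  rw [posteriorMean, norm_sub_sq_real, real_inner_smul_right, norm_smul, norm_eq_abs, mul_pow,
    sq_abs]
  obtain rfl | hy := eq_or_ne y 0
  · simp [meanCosine_zero]
  · field_simp
    ring

variable [MeasurableSpace E] [BorelSpace E]

theorem abs_meanCosine_le_one [Nontrivial E] {R s : ℝ} (hR : 0 ≤ R) (hs : 0 < s) (y : E) :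
    |meanCosine R s y| ≤ 1 := by
  rw [meanCosine_eq_besselRatio_norm hR hs]
  exact abs_besselRatio_norm_le_one _

theorem measurable_meanCosine [Nontrivial E] {R s : ℝ} (hR : 0 ≤ R) (hs : 0 < s) :
    Measurable (meanCosine R s : E → ℝ) := by
  rw [funext (meanCosine_eq_besselRatio_norm (E := E) hR hs)]
  exact measurable_besselRatio_norm.comp (measurable_const_smul (R / s))

theorem integrable_meanCosine_sq [Nontrivial E] {R s : ℝ} (hR : 0 ≤ R) (hs : 0 < s)
    (μ : Measure E) [IsFiniteMeasure μ] : Integrable (fun y ↦ meanCosine R s y ^ 2) μ := by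
  refine .of_bound ((measurable_meanCosine hR hs).pow_const 2).aestronglyMeasurable 1
    (.of_forall fun y ↦ ?_)
  rw [norm_pow, norm_eq_abs]
  exact pow_le_one₀ (abs_nonneg _) (abs_meanCosine_le_one hR hs y)

theorem integrable_meanCosine_mul_residual [Nontrivial E] {s : ℝ} (hs : 0 < s) (x : E)
    (μ : Measure E) [IsFiniteMeasure μ] :
    Integrable (fun y ↦ meanCosine ‖x‖ s y * (inner ℝ x y / ‖y‖ - ‖x‖ * meanCosine ‖x‖ s y))
      μ := by
  have hmeas := measurable_meanCosine (E := E) (norm_nonneg x) hs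
  refine .of_bound (by fun_prop) (1 * (‖x‖ + ‖x‖ * 1)) (.of_forall fun y ↦ ?_)
  have hcos := abs_meanCosine_le_one (norm_nonneg x) hs y
  have hinner : |inner ℝ x y / ‖y‖| ≤ ‖x‖ := by
    rw [abs_div, abs_norm]
    exact div_le_of_le_mul₀ (norm_nonneg y) (norm_nonneg x) (abs_real_inner_le_norm x y)
  rw [norm_mul, norm_eq_abs, norm_eq_abs]
  gcongr
  refine (abs_sub _ _).trans ?_
  rw [abs_mul, abs_norm]
  gcongr

theorem integral_comp_add_sqrt_smul_stdGaussian {s : ℝ} (hs : 0 < s) (x : E) (F : E → G) :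
    ∫ z, F (x + √s • z) ∂ProbabilityTheory.stdGaussian E =
      ((2 * π) ^ (-(finrank ℝ E : ℝ) / 2) * (√s ^ finrank ℝ E)⁻¹) •
        ∫ y, exp (-‖y - x‖ ^ 2 / (2 * s)) • F y := by
  let H (y : E) : G := exp (-‖y‖ ^ 2 / (2 * s)) • F (x + y)
  have hscale (z : E) : exp (-‖z‖ ^ 2 / 2) • F (x + √s • z) = H (√s • z) := by
    simp only [H, norm_smul, Real.norm_of_nonneg (sqrt_nonneg s), mul_pow, sq_sqrt hs.le]
    field_simp
  have htranslate : ∫ y, H y = ∫ y, exp (-‖y - x‖ ^ 2 / (2 * s)) • F y := by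
    rw [← integral_sub_right_eq_self H x]
    simp only [H, add_sub_cancel]
  rw [integral_stdGaussian]
  simp only [hscale]
  rw [Measure.integral_comp_smul, abs_of_nonneg (by positivity), htranslate, mul_smul]

theorem integral_radial_mul_residual_eq_zero [Nontrivial E] {s : ℝ} (hs : 0 < s) (x : E)
    (g : ℝ → ℝ) :
    ∫ z, g ‖x + √s • z‖ * (inner ℝ x (x + √s • z) / ‖x + √s • z‖ -
      ‖x‖ * meanCosine ‖x‖ s (x + √s • z)) ∂ProbabilityTheory.stdGaussian E = 0 := by
  rw [integral_comp_add_sqrt_smul_stdGaussian hs x fun y ↦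
    g ‖y‖ * (inner ℝ x y / ‖y‖ - ‖x‖ * meanCosine ‖x‖ s y)]
  refine smul_eq_zero_of_right _ (integral_eq_zero_of_integral_sphere_eq_zero _ fun r hr ↦ ?_)
  set v : E := (r / s) • x with hv
  have hnorm : ‖v‖ = r * ‖x‖ / s := by
    rw [norm_smul, Real.norm_of_nonneg (by positivity), div_mul_eq_mul_div]
  set h : ℝ := besselRatio ((finrank ℝ E : ℝ) / 2) ‖v‖ with hh
  have hintegrand (θ : sphere (0 : E) 1) :
      exp (-‖r • (θ : E) - x‖ ^ 2 / (2 * s)) • (g ‖r • (θ : E)‖ *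
        (inner ℝ x (r • (θ : E)) / ‖r • (θ : E)‖ - ‖x‖ * meanCosine ‖x‖ s (r • (θ : E)))) =
      exp (-(r ^ 2 + ‖x‖ ^ 2) / (2 * s)) * g r * (s / r) *
        (inner ℝ v θ ^ 1 * exp (inner ℝ v θ) -
          ‖v‖ * h * (inner ℝ v θ ^ 0 * exp (inner ℝ v θ))) := by
    rw [exp_neg_norm_smul_sub_sq_div, meanCosine, norm_smul, norm_eq_of_mem_sphere, mul_one,
      Real.norm_of_nonneg hr.le, ← hv, ← hnorm, ← hh, hnorm, hv, real_inner_smul_left,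
      real_inner_smul_right, smul_eq_mul]
    field_simp
  simp only [hintegrand]
  rw [integral_const_mul, integral_sub (integrable_toSphere_of_continuous (by fun_prop))
    (integrable_toSphere_of_continuous (by fun_prop)), integral_const_mul]
  exact mul_eq_zero_of_right _ (sub_eq_zero.2 (sphereExpMoment_one_eq v))

theorem conditional_mean_error_general {s : ℝ} (hs : 0 < s) (x : E) :
    ∫ z, ‖x - posteriorMean ‖x‖ s (x + √s • z)‖ ^ 2 ∂ProbabilityTheory.stdGaussian E =
      ‖x‖ ^ 2 - ‖x‖ ^ 2 * ∫ z, meanCosine ‖x‖ s (x + √s • z) ^ 2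
        ∂ProbabilityTheory.stdGaussian E := by
  cases subsingleton_or_nontrivial E
  · simp [Subsingleton.elim x 0, posteriorMean]
  have hY : Measurable fun z : E ↦ x + √s • z := by fun_prop
  have hcosine : Integrable (fun z ↦ ‖x‖ ^ 2 * meanCosine ‖x‖ s (x + √s • z) ^ 2)
      (ProbabilityTheory.stdGaussian E) :=
    ((integrable_meanCosine_sq (norm_nonneg x) hs _).comp_measurable hY).const_mul _
  have hresidual := (integrable_meanCosine_mul_residual hs x
    ((ProbabilityTheory.stdGaussian E).map _)).comp_measurable hY
  have horthogonal := integral_radial_mul_residual_eq_zero hs x fun r ↦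
    besselRatio ((finrank ℝ E : ℝ) / 2) (r * ‖x‖ / s)
  simp only [Function.comp_def] at hresidual
  simp only [norm_sub_posteriorMean_sq]
  rw [integral_sub (by fun_prop) (hresidual.const_mul _), integral_sub (by fun_prop) hcosine,
    integral_const_mul, integral_const_mul, integral_const, probReal_univ, one_smul, sub_eq_self]
  exact mul_eq_zero_of_right _ horthogonal

end ConditionalMean

theorem euclNorm_eq_norm_toLp {n : ℕ} (z : Fin n → ℝ) : euclNorm z = ‖WithLp.toLp 2 z‖ := by
  rw [EuclideanSpace.norm_eq, euclNorm]
  simp only [Real.norm_eq_abs, sq_abs]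

theorem integral_stdGaussian_toLp {G : Type*} [NormedAddCommGroup G] [NormedSpace ℝ G] {n : ℕ}
    (F : EuclideanSpace ℝ (Fin n) → G) :
    ∫ z, F (WithLp.toLp 2 z) ∂stdGaussian n =
      ∫ y, F y ∂ProbabilityTheory.stdGaussian (EuclideanSpace ℝ (Fin n)) := by
  rw [← map_pi_eq_stdGaussian, _root_.stdGaussian]
  exact ((MeasurableEquiv.toLp 2 _).measurableEmbedding.integral_map F).symm

theorem conditional_mean_error (n : ℕ) (hn : 0 < n) (R s : ℝ) (hR : 0 < R) (hs : 0 < s)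
    (x : Fin n → ℝ) (hx : euclNorm x = R) :
    (∫ z, (∑ i, (x i -
          (R * besselRatio ((n : ℝ) / 2)
              (euclNorm (fun j => x j + Real.sqrt s * z j) * R / s) /
            euclNorm (fun j => x j + Real.sqrt s * z j)) *
            (x i + Real.sqrt s * z i)) ^ 2) ∂(stdGaussian n)) =
      R ^ 2 - R ^ 2 * ∫ z, (besselRatio ((n : ℝ) / 2)
          (euclNorm (fun j => x j + Real.sqrt s * z j) * R / s)) ^ 2 ∂(stdGaussian n) := by
  have h := conditional_mean_error_general hs (WithLp.toLp 2 x : EuclideanSpace ℝ (Fin n))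
  rw [← integral_stdGaussian_toLp, ← integral_stdGaussian_toLp, ← euclNorm_eq_norm_toLp, hx] at h
  simp only [EuclideanSpace.real_norm_sq_eq, posteriorMean, meanCosine,
    finrank_euclideanSpace_fin] at h
  simp only [euclNorm_eq_norm_toLp]
  exact h
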